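/- Fix a probability vector μ = (μ_1,…,μ_r) with positive entries, integers 1 ≤ K_1 ≤ … ≤ K_r ≤ P/2, and α ∈ (0,1). For any 2 ≤ ℓ ≤ n, the probability that the subgraph of G(n; μ, K, P, α) induced on the vertices {v_1,…,v_ℓ} is connected is at most min{1, ℓ^{ℓ−2} (α p_rr)^{ℓ−1}}, where p_rr = 1 − C(P−K_r, K_r)/C(P, K_r). -/

import Mathlib

/-!
The bound `1` is trivial. For the other bound, a connected graph on the `ℓ` vertices contains a
spanning tree rooted at vertex `0`, and the union bound is taken over those trees.

*Counting.* `exists_forest_family` is the upper-bound half of Cayley's formula for rooted forests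
(`a` roots, `b` other vertices): at most `a (a + b)^(b - 1)` parent functions suffice. The forests
are sorted by the set `S` of children of the roots: `S` is attached to the roots in `a ^ |S|` ways,
and the rest is a forest rooted at `S`. The resulting recursion is the binomial theorem
(`forestCount_rec`). For `a = 1`, `b = ℓ - 1` the bound is `ℓ^(ℓ - 2)`.

*Probability of one tree.* Channels and key rings are independent. The `ℓ - 1` channels of the tree
are all on with probability `α^(ℓ - 1)` (`sum_channels`). Whatever the ring of its parent, the ring
of a leaf meets it with probability at most `p_rr`, because the probability that two rings are
disjoint decreases in both sizes (`avoidProb_mono`, `ringLaw_hit_le`). Removing the leaves one at a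
time gives `p_rr^(ℓ - 1)` (`sum_forest_le`), with no need for equal ring sizes.
-/

open Filter

/-- Probability that a uniformly random `b`-subset of a `P`-set avoids a fixed `a`-subset. -/
noncomputable def avoidProb (P a b : ℕ) : ℝ := ((P - a).choose b : ℝ) / (P.choose b : ℝ)

/-- `p_{ab}` : probability that independent uniformly random key rings of sizes
`a` and `b` (from a pool of size `P`) intersect. -/
noncomputable def pEdge (P a b : ℕ) : ℝ := 1 - avoidProb P a b

/-- `λ_i` : mean edge probability of a class-`i` node in the inhomogeneous random key graph. -/
noncomputable def lamb {r : ℕ} (μ : Fin (r + 1) → ℝ) (K : Fin (r + 1) → ℕ) (P : ℕ)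
    (i : Fin (r + 1)) : ℝ :=
  ∑ j, μ j * pEdge P (K i) (K j)

/-- A configuration of the model: a class for each vertex, a key ring for each vertex,
and an on/off state for each (unordered) channel. -/
abbrev Config (n r P : ℕ) := (Fin n → Fin (r + 1)) × (Fin n → Finset (Fin P)) × (Sym2 (Fin n) → Bool)

/-- Probability weight of a configuration: classes are i.i.d. with law `μ`; given its class `i`,
a vertex's key ring is uniform among the `C(P, K i)` subsets of size `K i`; channels over
distinct pairs are i.i.d. Bernoulli(`α`) (diagonal channel variables are forced to `false`). -/
noncomputable def wt {n r P : ℕ} (μ : Fin (r + 1) → ℝ) (K : Fin (r + 1) → ℕ) (α : ℝ)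
    (c : Config n r P) : ℝ :=
  (∏ x : Fin n, μ (c.1 x)) *
    (∏ x : Fin n, if (c.2.1 x).card = K (c.1 x) then ((P.choose (K (c.1 x)) : ℝ))⁻¹ else 0) *
    (∏ e : Sym2 (Fin n),
      if e.IsDiag then (if c.2.2 e then 0 else 1) else (if c.2.2 e then α else 1 - α))

open Classical in
/-- Probability of an event under the heterogeneous key predistribution model
with on/off channels. -/
noncomputable def pr {n r P : ℕ} (μ : Fin (r + 1) → ℝ) (K : Fin (r + 1) → ℕ) (α : ℝ)
    (E : Config n r P → Prop) : ℝ :=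
  ∑ c : Config n r P, if E c then wt μ K α c else 0

/-- Two vertices are adjacent iff their key rings intersect and the channel between them is on. -/
def Adj {n r P : ℕ} (c : Config n r P) (x y : Fin n) : Prop :=
  x ≠ y ∧ ((c.2.1 x) ∩ (c.2.1 y)).Nonempty ∧ c.2.2 s(x, y) = true

/-- The random graph `G(n; μ, K, P, α)` as a simple graph. -/
def graphOf {n r P : ℕ} (c : Config n r P) : SimpleGraph (Fin n) :=
  SimpleGraph.fromRel (fun x y => ((c.2.1 x) ∩ (c.2.1 y)).Nonempty ∧ c.2.2 s(x, y) = true)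

/-- A vertex is isolated if it has no neighbours. -/
def Isolated {n r P : ℕ} (c : Config n r P) (x : Fin n) : Prop := ∀ y, ¬ Adj c x y

/-- The graph has no isolated nodes. -/
def NoIsolatedNodes {n r P : ℕ} (c : Config n r P) : Prop := ∀ x, ¬ Isolated c x

/-! ### Counting rooted forests -/

/-- The number of forests on `a + b` labelled vertices rooted at `a` prescribed vertices:
`a (a + b)^(b - 1)`, and `1` when `b = 0`. -/
def forestCount (a : ℕ) : ℕ → ℕ
  | 0 => 1
  | b + 1 => a * (a + b + 1) ^ b

/-- Sorting forests by the set of children of the roots (`s` of the `b + 1` non-roots) gives the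
recursion for `forestCount`; it is the binomial theorem for `(a + (b + 1)) ^ b`. -/
lemma forestCount_rec (a b : ℕ) :
    ∑ s ∈ Finset.range (b + 2),
      (b + 1).choose s • (if s = 0 then 0 else a ^ s * forestCount s (b + 1 - s)) =
      forestCount a (b + 1) := by
  rw [Finset.sum_range_succ']
  simp only [Nat.add_eq_zero_iff, one_ne_zero, and_false, if_false, if_true, mul_zero, add_zero,
    smul_eq_mul, Nat.add_sub_add_right]
  rw [forestCount, add_assoc a b 1, add_pow, Finset.mul_sum]
  refine Finset.sum_congr rfl fun j hj => ?_
  have hj' : j ≤ b := Nat.lt_succ_iff.mp (Finset.mem_range.mp hj)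
  have hch : (b + 1).choose (j + 1) * (j + 1) = (b + 1) * b.choose j :=
    (Nat.add_one_mul_choose_eq b j).symm
  obtain ⟨d, rfl⟩ := Nat.exists_eq_add_of_le hj'
  rw [Nat.add_sub_cancel_left]
  cases d with
  | zero => simp [forestCount, pow_succ, mul_comm]
  | succ d =>
    rw [forestCount]
    calc _ = ((j + (d + 1) + 1).choose (j + 1) * (j + 1)) * a ^ (j + 1) *
          (j + (d + 1) + 1) ^ d := by ring
      _ = _ := by rw [hch, Nat.cast_id]; ring

/-- A family of at most `forestCount #A #B` rooted forests, each given by its parent function, such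
that every graph in which all of `B` can be reached from `A` inside `A ∪ B` (expressed as a cut
condition) contains one of them. Acyclicity is recorded by a rank `ρ` decreasing towards the
roots. -/
lemma exists_forest_family {V : Type*} [Fintype V] [DecidableEq V] (b : ℕ) :
    ∀ A B : Finset V, Disjoint A B → B.card = b →
    ∃ F : Finset (V → V), F.card ≤ forestCount A.card b ∧
      (∀ p ∈ F, (∀ v ∈ B, p v ∈ A ∪ B) ∧ ∃ ρ : V → ℕ, ∀ v ∈ B, ρ (p v) < ρ v) ∧
      ∀ G : SimpleGraph V,
        (∀ T ⊆ B, T.Nonempty → ∃ t ∈ T, ∃ u ∈ (A ∪ B) \ T, G.Adj t u) →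
        ∃ p ∈ F, ∀ v ∈ B, G.Adj v (p v) := by
  induction b using Nat.strong_induction_on with
  | _ b ih =>
  intro A B hAB hB
  cases b with
  | zero =>
    obtain rfl := Finset.card_eq_zero.mp hB
    exact ⟨{id}, by simp [forestCount], by simp, by simp⟩
  | succ b =>
  -- the family chosen for `S` handles the vertices below the set `S` of children of the roots
  have key : ∀ S : Finset V, ∃ F : Finset (V → V), S ⊆ B → S.Nonempty →
      F.card ≤ forestCount S.card (b + 1 - S.card) ∧
      (∀ p ∈ F, (∀ v ∈ B \ S, p v ∈ S ∪ (B \ S)) ∧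
        ∃ ρ : V → ℕ, ∀ v ∈ B \ S, ρ (p v) < ρ v) ∧
      ∀ G : SimpleGraph V,
        (∀ T ⊆ B \ S, T.Nonempty → ∃ t ∈ T, ∃ u ∈ (S ∪ (B \ S)) \ T, G.Adj t u) →
        ∃ p ∈ F, ∀ v ∈ B \ S, G.Adj v (p v) := by
    intro S
    by_cases hS : S ⊆ B ∧ S.Nonempty
    · have hpos := hS.2.card_pos
      obtain ⟨F, hF⟩ := ih (b + 1 - S.card) (by omega) S (B \ S) Finset.disjoint_sdiff
        (by rw [Finset.card_sdiff_of_subset hS.1, hB])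
      exact ⟨F, fun _ _ => hF⟩
    · exact ⟨∅, fun h1 h2 => absurd ⟨h1, h2⟩ hS⟩
  choose sub hsub using key
  let top : Finset V → Finset (V → V) := fun S =>
    Fintype.piFinset fun v => if v ∈ S then A else {v}
  have htop : ∀ S, (top S).card = A.card ^ S.card := by
    intro S
    simp only [top, Fintype.card_piFinset, apply_ite Finset.card, Finset.card_singleton]
    rw [Finset.prod_ite, Finset.prod_const, Finset.prod_const_one, mul_one]
    simp
  let glue : Finset V → (V → V) × (V → V) → V → V := fun S q v =>
    if v ∈ S then q.1 v else q.2 v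
  refine ⟨(B.powerset.filter (·.Nonempty)).biUnion fun S => (top S ×ˢ sub S).image (glue S),
    ?_, ?_, ?_⟩
  · refine Finset.card_biUnion_le.trans ?_
    have hsum := Finset.sum_powerset_apply_card (x := B)
      fun s => if s = 0 then 0 else A.card ^ s * forestCount s (b + 1 - s)
    rw [hB] at hsum
    rw [← forestCount_rec, ← hsum, Finset.sum_filter]
    refine Finset.sum_le_sum fun S hS => ?_
    rcases S.eq_empty_or_nonempty with rfl | hne
    · simp
    · rw [if_pos hne, if_neg hne.card_pos.ne']
      refine Finset.card_image_le.trans ?_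
      rw [Finset.card_product, htop]
      exact Nat.mul_le_mul_left _ (hsub S (Finset.mem_powerset.mp hS) hne).1
  · intro p hp
    simp only [Finset.mem_biUnion, Finset.mem_filter, Finset.mem_powerset, Finset.mem_image,
      Finset.mem_product] at hp
    obtain ⟨S, ⟨hSB, hne⟩, ⟨g, f⟩, ⟨hg, hf⟩, rfl⟩ := hp
    obtain ⟨hmem, ρ, hρ⟩ := (hsub S hSB hne).2.1 f hf
    have hgA : ∀ v ∈ S, g v ∈ A := by
      intro v hv
      have := Fintype.mem_piFinset.mp hg v
      simpa [hv] using this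
    have hfB : ∀ v ∈ B, v ∉ S → f v ∈ B := by
      intro v hv hvS
      have := hmem v (Finset.mem_sdiff.mpr ⟨hv, hvS⟩)
      rwa [Finset.union_sdiff_of_subset hSB] at this
    refine ⟨fun v hv => ?_, fun v => if v ∈ A then 0 else ρ v + 1, fun v hv => ?_⟩
    · by_cases hvS : v ∈ S
      · simp [glue, hvS, hgA v hvS]
      · simp [glue, hvS, hfB v hv hvS]
    · have hvA : v ∉ A := fun h => Finset.disjoint_left.mp hAB h hv
      by_cases hvS : v ∈ S
      · simp [glue, hvS, hgA v hvS, hvA]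
      · have h1 : f v ∉ A := fun h => Finset.disjoint_left.mp hAB h (hfB v hv hvS)
        simp [glue, hvS, hvA, h1, hρ v (Finset.mem_sdiff.mpr ⟨hv, hvS⟩)]
  · intro G hG
    classical
    let S : Finset V := B.filter fun v => ∃ a ∈ A, G.Adj v a
    have hSB : S ⊆ B := Finset.filter_subset _ _
    have hne : S.Nonempty := by
      obtain ⟨t, ht, u, hu, hadj⟩ := hG B subset_rfl (Finset.card_pos.mp (by omega))
      refine ⟨t, Finset.mem_filter.mpr ⟨ht, u, ?_, hadj⟩⟩
      simp only [Finset.mem_sdiff, Finset.mem_union] at hu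
      tauto
    obtain ⟨f, hf, hfadj⟩ := (hsub S hSB hne).2.2 G (by
      intro T hT hTne
      obtain ⟨t, ht, u, hu, hadj⟩ := hG T (hT.trans Finset.sdiff_subset) hTne
      refine ⟨t, ht, u, ?_, hadj⟩
      have htS := Finset.mem_sdiff.mp (hT ht)
      have huA : u ∉ A := fun h => htS.2 (Finset.mem_filter.mpr ⟨htS.1, u, h, hadj⟩)
      rw [Finset.union_sdiff_of_subset hSB]
      simp only [Finset.mem_sdiff, Finset.mem_union] at hu ⊢
      tauto)
    have hpar : ∀ v, ∃ a, if v ∈ S then a ∈ A ∧ G.Adj v a else a = v := by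
      intro v
      by_cases hv : v ∈ S
      · obtain ⟨a, ha⟩ := (Finset.mem_filter.mp hv).2
        exact ⟨a, by rw [if_pos hv]; exact ha⟩
      · exact ⟨v, by rw [if_neg hv]⟩
    choose g hg using hpar
    refine ⟨glue S (g, f), ?_, fun v hv => ?_⟩
    · simp only [Finset.mem_biUnion, Finset.mem_filter, Finset.mem_powerset, Finset.mem_image,
        Finset.mem_product]
      refine ⟨S, ⟨hSB, hne⟩, (g, f), ⟨Fintype.mem_piFinset.mpr fun v => ?_, hf⟩, rfl⟩
      have := hg v
      by_cases hv : v ∈ S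
      · rw [if_pos hv] at this ⊢
        exact this.1
      · rw [if_neg hv] at this ⊢
        exact Finset.mem_singleton.mpr this
    · by_cases hvS : v ∈ S
      · have := hg v
        rw [if_pos hvS] at this
        simpa [glue, hvS] using this.2
      · simpa [glue, hvS] using hfadj v (Finset.mem_sdiff.mpr ⟨hv, hvS⟩)

/-- In a connected induced subgraph every vertex set missing a given vertex `o` is left by an
edge. -/
lemma cut_of_induce_connected {V : Type*} (G : SimpleGraph V) (s : Set V)
    (h : (G.induce s).Connected) (o : V) (ho : o ∈ s) (T : Finset V)
    (hT : ∀ t ∈ T, t ∈ s) (hoT : o ∉ T) (hne : T.Nonempty) :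
    ∃ t ∈ T, ∃ u ∈ s, u ∉ T ∧ G.Adj t u := by
  obtain ⟨t, ht⟩ := hne
  obtain ⟨w⟩ := h.preconnected ⟨t, hT t ht⟩ ⟨o, ho⟩
  obtain ⟨d, -, hd1, hd2⟩ := w.exists_boundary_dart {x | (x : V) ∈ T} ht hoT
  exact ⟨d.fst, hd1, d.snd, d.snd.2, hd2, d.adj⟩

/-! ### Independent samples along a forest -/

section Sampling
variable {V X : Type*} [Fintype V] [DecidableEq V] [Fintype X]

/-- Resampling the coordinate `b` of an i.i.d. family leaves expectations unchanged. -/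
lemma sum_resample (ν : X → ℝ) (hν : ∑ x, ν x = 1) (b : V) (g : (V → X) → ℝ) :
    ∑ σ : V → X, (∏ v, ν (σ v)) * g σ =
      ∑ σ : V → X, (∏ v, ν (σ v)) * ∑ x, ν x * g (Function.update σ b x) := by
  have h1 : ∑ σ : V → X, (∏ v, ν (σ v)) * g σ =
      ∑ q : (V → X) × X, (∏ v, ν (q.1 v)) * ν q.2 * g q.1 := by
    rw [Fintype.sum_prod_type]
    refine Finset.sum_congr rfl fun σ _ => ?_
    simp only
    rw [← Finset.sum_mul, ← Finset.mul_sum, hν, mul_one]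
  have h2 : ∑ σ : V → X, (∏ v, ν (σ v)) * ∑ x, ν x * g (Function.update σ b x) =
      ∑ q : (V → X) × X, (∏ v, ν (q.1 v)) * ν q.2 * g (Function.update q.1 b q.2) := by
    rw [Fintype.sum_prod_type]
    refine Finset.sum_congr rfl fun σ _ => ?_
    rw [Finset.mul_sum]
    exact Finset.sum_congr rfl fun x _ => by ring
  rw [h1, h2]
  -- swapping the `b`-th coordinate with the fresh sample is a weight-preserving involution
  have hinv : Function.Involutive
      fun q : (V → X) × X => (Function.update q.1 b q.2, q.1 b) := by
    rintro ⟨σ, x⟩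
    simp
  refine Fintype.sum_equiv hinv.toPerm _ _ ?_
  rintro ⟨σ, x⟩
  simp only [Function.Involutive.coe_toPerm, Function.update_idem,
    Function.update_eq_self]
  congr 1
  rw [← Finset.mul_prod_erase _ _ (Finset.mem_univ b),
    ← Finset.mul_prod_erase _ (fun v => ν (Function.update σ b x v)) (Finset.mem_univ b)]
  have hrest : ∏ v ∈ Finset.univ.erase b, ν (Function.update σ b x v) =
      ∏ v ∈ Finset.univ.erase b, ν (σ v) := Finset.prod_congr rfl fun v hv => by
    rw [Function.update_of_ne (Finset.ne_of_mem_erase hv)]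
  rw [hrest]
  simp only [Function.update_self]
  ring

/-- If a fresh sample is related to any given value with probability at most `q`, all edges
of a forest are present with probability at most `q` to the number of edges: a vertex of maximal
rank is a leaf, so its sample can be integrated out. -/
lemma sum_forest_le (ν : X → ℝ) (hν0 : ∀ x, 0 ≤ ν x) (hν : ∑ x, ν x = 1)
    (R : X → X → Prop) [DecidableRel R] (q : ℝ) (hq : 0 ≤ q)
    (hR : ∀ y, ν y ≠ 0 → ∑ x, ν x * (if R x y then 1 else 0) ≤ q)
    (p : V → V) (ρ : V → ℕ) (b : ℕ) : ∀ B : Finset V, B.card = b →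
    (∀ v ∈ B, ρ (p v) < ρ v) →
    ∑ σ : V → X, (∏ v, ν (σ v)) * (∏ v ∈ B, if R (σ v) (σ (p v)) then 1 else 0) ≤ q ^ b := by
  induction b with
  | zero =>
    intro B hB _
    obtain rfl := Finset.card_eq_zero.mp hB
    simp only [Finset.prod_empty, mul_one, pow_zero]
    rw [← Fintype.prod_sum fun (_ : V) x => ν x]
    simp [hν]
  | succ b ih =>
    intro B hB hρ
    obtain ⟨l, hl, hmax⟩ := B.exists_max_image ρ (Finset.card_pos.mp (by omega))
    have hpl : ∀ v ∈ B, p v ≠ l := fun v hv h => by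
      have h1 := hρ v hv
      have h2 := hmax v hv
      rw [h] at h1
      omega
    rw [sum_resample ν hν l, pow_succ]
    calc _ = ∑ σ : V → X, (∏ v, ν (σ v)) *
          (∏ v ∈ B.erase l, if R (σ v) (σ (p v)) then 1 else 0) *
            ∑ x, ν x * (if R x (σ (p l)) then 1 else 0) := by
          refine Finset.sum_congr rfl fun σ _ => ?_
          rw [mul_assoc]
          congr 1
          rw [Finset.mul_sum]
          refine Finset.sum_congr rfl fun x _ => ?_
          have hrest : (∏ v ∈ B.erase l, if R (Function.update σ l x v)
              (Function.update σ l x (p v)) then (1 : ℝ) else 0) =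
              ∏ v ∈ B.erase l, if R (σ v) (σ (p v)) then 1 else 0 :=
            Finset.prod_congr rfl fun v hv => by
              rw [Function.update_of_ne (Finset.ne_of_mem_erase hv),
                Function.update_of_ne (hpl v (Finset.mem_of_mem_erase hv))]
          rw [← Finset.mul_prod_erase _ _ hl, hrest, Function.update_self,
            Function.update_of_ne (hpl l hl)]
          ring
      _ ≤ ∑ σ : V → X, (∏ v, ν (σ v)) *
          (∏ v ∈ B.erase l, if R (σ v) (σ (p v)) then 1 else 0) * q := by
          refine Finset.sum_le_sum fun σ _ => ?_
          by_cases h0 : ν (σ (p l)) = 0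
          · rw [Finset.prod_eq_zero (Finset.mem_univ (p l)) h0]
            simp
          · refine mul_le_mul_of_nonneg_left (hR _ h0) (mul_nonneg
              (Finset.prod_nonneg fun v _ => hν0 _) (Finset.prod_nonneg fun v _ => ?_))
            split_ifs <;> norm_num
      _ ≤ q ^ b * q := by
          rw [← Finset.sum_mul]
          refine mul_le_mul_of_nonneg_right (ih _ ?_ ?_) hq
          · rw [Finset.card_erase_of_mem hl, hB, Nat.add_sub_cancel]
          · exact fun v hv => hρ v (Finset.mem_of_mem_erase hv)

end Sampling

/-! ### Key rings -/

lemma avoidProb_mono {P a k m : ℕ} (ha : a ≤ m) (hk : k ≤ m) (hm : 2 * m ≤ P) :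
    avoidProb P m m ≤ avoidProb P a k := by
  unfold avoidProb
  have hPk : 0 < P.choose k := Nat.choose_pos (by omega)
  have hPm : 0 < P.choose m := Nat.choose_pos (by omega)
  rw [div_le_div_iff₀ (by exact_mod_cast hPm) (by exact_mod_cast hPk)]
  norm_cast
  -- both sides of `hsym` count ordered pairs of disjoint subsets of sizes `k` and `m`
  have hsym : P.choose k * (P - k).choose m = P.choose m * (P - m).choose k := by
    have h1 := Nat.choose_mul (n := P) (Nat.le_add_right k m)
    have h2 := Nat.choose_mul (n := P) (Nat.le_add_left m k)
    rw [Nat.add_sub_cancel_left] at h1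
    rw [Nat.add_sub_cancel] at h2
    rw [← h1, ← h2, Nat.choose_symm_add]
  calc (P - m).choose m * P.choose k ≤ (P - k).choose m * P.choose k :=
        Nat.mul_le_mul_right _ (Nat.choose_le_choose _ (by omega))
    _ = (P - m).choose k * P.choose m := by rw [mul_comm, hsym, mul_comm]
    _ ≤ _ := Nat.mul_le_mul_right _ (Nat.choose_le_choose _ (by omega))

lemma pEdge_nonneg {P m : ℕ} : 0 ≤ pEdge P m m := by
  unfold pEdge avoidProb
  rw [sub_nonneg]
  refine div_le_one_of_le₀ ?_ (by positivity)
  exact_mod_cast Nat.choose_le_choose m (Nat.sub_le P m)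

/-- The law of a single key ring, the class being averaged out. -/
noncomputable def ringLaw {r : ℕ} (μ : Fin (r + 1) → ℝ) (K : Fin (r + 1) → ℕ) (P : ℕ)
    (S : Finset (Fin P)) : ℝ :=
  ∑ i, μ i * (if S.card = K i then ((P.choose (K i) : ℝ))⁻¹ else 0)

/-- A uniformly random `k`-subset hits a fixed set `A` with probability `pEdge P #A k`. -/
lemma sum_hit (P k : ℕ) (hk : k ≤ P) (A : Finset (Fin P)) :
    ∑ S : Finset (Fin P), (if S.card = k then ((P.choose k : ℝ))⁻¹ else 0) *
      (if (S ∩ A).Nonempty then 1 else 0) = pEdge P A.card k := by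
  have hpos : (0 : ℝ) < P.choose k := by exact_mod_cast Nat.choose_pos hk
  have hall : ∑ S : Finset (Fin P), (if S.card = k then ((P.choose k : ℝ))⁻¹ else 0) = 1 := by
    rw [← Finset.sum_filter, Finset.sum_const, Finset.univ_filter_card_eq, Finset.card_powersetCard]
    simp [hpos.ne']
  have hmiss : ∑ S : Finset (Fin P), (if S.card = k then ((P.choose k : ℝ))⁻¹ else 0) *
      (if (S ∩ A).Nonempty then 0 else 1) = avoidProb P A.card k := by
    have hset : (Finset.univ.filter fun S : Finset (Fin P) => S.card = k ∧ ¬ (S ∩ A).Nonempty) =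
        Finset.powersetCard k Aᶜ := by
      ext S
      simp only [Finset.mem_filter, Finset.mem_univ, true_and, Finset.mem_powersetCard,
        Finset.not_nonempty_iff_eq_empty, ← Finset.disjoint_iff_inter_eq_empty,
        Finset.subset_compl_iff_disjoint_right, and_comm]
    calc _ = ∑ S : Finset (Fin P), if S.card = k ∧ ¬ (S ∩ A).Nonempty then
          ((P.choose k : ℝ))⁻¹ else 0 := by
          refine Finset.sum_congr rfl fun S _ => ?_
          by_cases h1 : S.card = k <;> by_cases h2 : (S ∩ A).Nonempty <;> simp [h1, h2]
      _ = _ := by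
          rw [← Finset.sum_filter, hset, Finset.sum_const, Finset.card_powersetCard,
            Finset.card_compl, Fintype.card_fin, nsmul_eq_mul, avoidProb, div_eq_mul_inv]
  rw [pEdge, ← hmiss]
  nth_rw 2 [← hall]
  rw [← Finset.sum_sub_distrib]
  refine Finset.sum_congr rfl fun S _ => ?_
  split_ifs <;> simp

lemma sum_ringLaw {r : ℕ} (μ : Fin (r + 1) → ℝ) (hμsum : ∑ i, μ i = 1)
    (K : Fin (r + 1) → ℕ) (P : ℕ) (hK : ∀ i, K i ≤ P) :
    ∑ S, ringLaw μ K P S = 1 := by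
  unfold ringLaw
  rw [Finset.sum_comm, ← hμsum]
  refine Finset.sum_congr rfl fun i _ => ?_
  have hpos : (0 : ℝ) < P.choose (K i) := by exact_mod_cast Nat.choose_pos (hK i)
  rw [← Finset.mul_sum, ← Finset.sum_filter, Finset.sum_const, Finset.univ_filter_card_eq,
    Finset.card_powersetCard]
  simp [hpos.ne']

/-- If no class has rings larger than `m`, a random key ring hits any fixed ring of positive
probability with probability at most `pEdge P m m`. -/
lemma ringLaw_hit_le {r : ℕ} (μ : Fin (r + 1) → ℝ) (hμpos : ∀ i, 0 < μ i)
    (hμsum : ∑ i, μ i = 1) (K : Fin (r + 1) → ℕ) (P m : ℕ) (hK : ∀ i, K i ≤ m)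
    (hm : 2 * m ≤ P) (A : Finset (Fin P)) (hA : ringLaw μ K P A ≠ 0) :
    ∑ S, ringLaw μ K P S * (if (S ∩ A).Nonempty then 1 else 0) ≤ pEdge P m m := by
  have hAm : A.card ≤ m := by
    by_contra hlt
    refine hA (Finset.sum_eq_zero fun i _ => ?_)
    have := hK i
    rw [if_neg (by omega), mul_zero]
  unfold ringLaw
  simp only [Finset.sum_mul]
  rw [Finset.sum_comm]
  calc _ = ∑ i, μ i * pEdge P A.card (K i) := by
        refine Finset.sum_congr rfl fun i _ => ?_
        rw [← sum_hit P (K i) (by have := hK i; omega) A, Finset.mul_sum]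
        exact Finset.sum_congr rfl fun S _ => by ring
    _ ≤ ∑ i, μ i * pEdge P m m := Finset.sum_le_sum fun i _ =>
        mul_le_mul_of_nonneg_left (sub_le_sub_left (avoidProb_mono hAm (hK i) hm) _) (hμpos i).le
    _ = pEdge P m m := by rw [← Finset.sum_mul, hμsum, one_mul]

/-! ### Channels and the forest event -/

/-- Weight of the state `v` of the channel `e`. -/
noncomputable def chanWt {n : ℕ} (α : ℝ) (e : Sym2 (Fin n)) (v : Bool) : ℝ :=
  if e.IsDiag then (if v then 0 else 1) else (if v then α else 1 - α)

/-- The channels along a forest are all on with probability `α` to the number of its edges. -/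
lemma sum_channels {n : ℕ} (α : ℝ) (p : Fin n → Fin n) (ρ : Fin n → ℕ) (B : Finset (Fin n))
    (hρ : ∀ v ∈ B, ρ (p v) < ρ v) :
    ∑ χ : Sym2 (Fin n) → Bool, (∏ e, chanWt α e (χ e)) *
      (if ∀ v ∈ B, χ s(v, p v) = true then 1 else 0) = α ^ B.card := by
  classical
  let E : Finset (Sym2 (Fin n)) := B.image fun v => s(v, p v)
  -- a coincidence of two edges would make each endpoint the parent of the other
  have hE : E.card = B.card := by
    refine Finset.card_image_of_injOn fun v hv w hw h => ?_
    rcases Sym2.eq_iff.mp h with h | ⟨h1, h2⟩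
    · exact h.1
    · have hv' := hρ v hv
      have hw' := hρ w hw
      rw [h2] at hv'
      rw [← h1] at hw'
      omega
  have hnd : ∀ e ∈ E, ¬ e.IsDiag := by
    intro e he
    obtain ⟨v, hv, rfl⟩ := Finset.mem_image.mp he
    rw [Sym2.mk_isDiag_iff]
    intro h
    have := hρ v hv
    rw [← h] at this
    omega
  calc _ = ∑ χ : Sym2 (Fin n) → Bool, ∏ e, chanWt α e (χ e) *
          (if e ∈ E → χ e = true then 1 else 0) := by
        refine Finset.sum_congr rfl fun χ _ => ?_
        rw [Finset.prod_mul_distrib, Finset.prod_ite_zero]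
        simp [E]
    _ = ∏ e : Sym2 (Fin n), ∑ v : Bool, chanWt α e v * (if e ∈ E → v = true then 1 else 0) :=
        (Fintype.prod_sum fun e v => chanWt α e v * (if e ∈ E → v = true then 1 else 0)).symm
    _ = ∏ e : Sym2 (Fin n), if e ∈ E then α else 1 := by
        refine Finset.prod_congr rfl fun e _ => ?_
        by_cases he : e ∈ E
        · simp [chanWt, he, hnd e he]
        · by_cases hd : e.IsDiag <;> simp [chanWt, he, hd]
    _ = α ^ B.card := by rw [Finset.prod_ite_mem, Finset.univ_inter, Finset.prod_const, hE]

lemma wt_nonneg {n r P : ℕ} (μ : Fin (r + 1) → ℝ) (hμpos : ∀ i, 0 < μ i) (K : Fin (r + 1) → ℕ)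
    (α : ℝ) (hα : α ∈ Set.Ioo (0 : ℝ) 1) (c : Config n r P) : 0 ≤ wt μ K α c := by
  unfold wt
  refine mul_nonneg (mul_nonneg (Finset.prod_nonneg fun x _ => (hμpos _).le)
    (Finset.prod_nonneg fun x _ => ?_)) (Finset.prod_nonneg fun e _ => ?_)
  · split_ifs <;> positivity
  · have := hα.1
    have := hα.2
    split_ifs <;> linarith

/-- The edges `{v, p v}`, `v ∈ B`, of a forest are simultaneously present with probability at most
`(α * pEdge P m m) ^ #B`, where `m` bounds the ring sizes. -/
lemma pr_forest_le {n r : ℕ} (μ : Fin (r + 1) → ℝ)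
    (hμpos : ∀ i, 0 < μ i) (hμsum : ∑ i, μ i = 1)
    (K : Fin (r + 1) → ℕ) (P m : ℕ) (α : ℝ) (hα : α ∈ Set.Ioo (0 : ℝ) 1)
    (hK : ∀ i, K i ≤ m) (hm : 2 * m ≤ P)
    (p : Fin n → Fin n) (ρ : Fin n → ℕ) (B : Finset (Fin n)) (hρ : ∀ v ∈ B, ρ (p v) < ρ v) :
    pr μ K α (fun c : Config n r P => ∀ v ∈ B, (graphOf c).Adj v (p v)) ≤
      (α * pEdge P m m) ^ B.card := by
  classical
  have hν0 : ∀ S, 0 ≤ ringLaw μ K P S := fun S =>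
    Finset.sum_nonneg fun i _ => mul_nonneg (hμpos i).le (by split_ifs <;> positivity)
  have hrings := sum_forest_le (ringLaw μ K P) hν0
    (sum_ringLaw μ hμsum K P fun i => by have := hK i; omega)
    (fun S A => (S ∩ A).Nonempty) (pEdge P m m) pEdge_nonneg
    (fun A hA => ringLaw_hit_le μ hμpos hμsum K P m hK hm A hA) p ρ B.card B rfl hρ
  -- averaging out the classes
  have hclass : ∀ σ : Fin n → Finset (Fin P), ∑ t : Fin n → Fin (r + 1),
      (∏ x, μ (t x)) *
        (∏ x, if (σ x).card = K (t x) then ((P.choose (K (t x)) : ℝ))⁻¹ else 0) =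
      ∏ x, ringLaw μ K P (σ x) := by
    intro σ
    unfold ringLaw
    rw [Fintype.prod_sum]
    exact Finset.sum_congr rfl fun t _ => Finset.prod_mul_distrib.symm
  calc _ ≤ ∑ c : Config n r P, ((∏ x, μ (c.1 x)) *
        (∏ x, if (c.2.1 x).card = K (c.1 x) then ((P.choose (K (c.1 x)) : ℝ))⁻¹ else 0)) *
        (∏ v ∈ B, if (c.2.1 v ∩ c.2.1 (p v)).Nonempty then 1 else 0) *
        ((∏ e, chanWt α e (c.2.2 e)) *
          (if ∀ v ∈ B, c.2.2 s(v, p v) = true then 1 else 0)) := by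
        unfold pr
        refine Finset.sum_le_sum fun c _ => ?_
        have hw := wt_nonneg μ hμpos K α hα c
        have hind : (∏ v ∈ B, if (c.2.1 v ∩ c.2.1 (p v)).Nonempty then (1 : ℝ) else 0) =
            if ∀ v ∈ B, (c.2.1 v ∩ c.2.1 (p v)).Nonempty then 1 else 0 := by
          rw [Finset.prod_ite_zero, Finset.prod_const_one]
          congr
        rw [hind]
        by_cases hE : ∀ v ∈ B, (graphOf c).Adj v (p v)
        · have hE' : ∀ v ∈ B, (c.2.1 v ∩ c.2.1 (p v)).Nonempty ∧ c.2.2 s(v, p v) = true := by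
            intro v hv
            rcases (SimpleGraph.fromRel_adj _ _ _).mp (hE v hv) with ⟨-, h | h⟩
            · exact h
            · rwa [Finset.inter_comm, Sym2.eq_swap] at h
          rw [if_pos hE, if_pos fun v hv => (hE' v hv).1, if_pos fun v hv => (hE' v hv).2,
            mul_one, mul_one]
          exact le_of_eq rfl
        · rw [if_neg hE]
          have : 0 ≤ wt μ K α c * (if ∀ v ∈ B, (c.2.1 v ∩ c.2.1 (p v)).Nonempty then 1 else 0) *
              (if ∀ v ∈ B, c.2.2 s(v, p v) = true then 1 else 0) :=
            mul_nonneg (mul_nonneg hw (by split_ifs <;> norm_num)) (by split_ifs <;> norm_num)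
          refine this.trans (le_of_eq ?_)
          unfold wt chanWt
          ring
    _ = (∑ σ : Fin n → Finset (Fin P), (∏ x, ringLaw μ K P (σ x)) *
          (∏ v ∈ B, if (σ v ∩ σ (p v)).Nonempty then 1 else 0)) * α ^ B.card := by
        rw [← sum_channels α p ρ B hρ, Fintype.sum_prod_type, Finset.sum_comm,
          Fintype.sum_prod_type, Finset.sum_mul]
        refine Finset.sum_congr rfl fun σ _ => ?_
        rw [← hclass σ, Finset.mul_sum]
        refine Finset.sum_congr rfl fun χ _ => ?_
        rw [Finset.sum_mul, Finset.sum_mul]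
    _ ≤ pEdge P m m ^ B.card * α ^ B.card :=
        mul_le_mul_of_nonneg_right hrings (pow_nonneg hα.1.le _)
    _ = _ := by rw [mul_pow, mul_comm]

lemma pr_mono {n r P : ℕ} (μ : Fin (r + 1) → ℝ) (hμpos : ∀ i, 0 < μ i) (K : Fin (r + 1) → ℕ)
    (α : ℝ) (hα : α ∈ Set.Ioo (0 : ℝ) 1) {E E' : Config n r P → Prop} (h : ∀ c, E c → E' c) :
    pr μ K α E ≤ pr μ K α E' := by
  classical
  unfold pr
  refine Finset.sum_le_sum fun c _ => ?_
  have hw := wt_nonneg μ hμpos K α hα c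
  by_cases hE : E c
  · rw [if_pos hE, if_pos (h c hE)]
  · rw [if_neg hE]
    split_ifs
    · exact hw
    · exact le_rfl

lemma pr_exists_le {n r P : ℕ} {ι : Type*} (μ : Fin (r + 1) → ℝ) (hμpos : ∀ i, 0 < μ i)
    (K : Fin (r + 1) → ℕ) (α : ℝ) (hα : α ∈ Set.Ioo (0 : ℝ) 1) (F : Finset ι)
    (E : ι → Config n r P → Prop) :
    pr μ K α (fun c => ∃ p ∈ F, E p c) ≤ ∑ p ∈ F, pr μ K α (E p) := by
  classical
  unfold pr
  rw [Finset.sum_comm]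
  refine Finset.sum_le_sum fun c _ => ?_
  have hw := wt_nonneg μ hμpos K α hα c
  have hnn : ∀ p ∈ F, 0 ≤ if E p c then wt μ K α c else 0 := fun p _ => by
    split_ifs
    · exact hw
    · exact le_rfl
  split_ifs with h
  · obtain ⟨p, hp, hEp⟩ := h
    refine le_trans (le_of_eq ?_) (Finset.single_le_sum hnn hp)
    rw [if_pos hEp]
  · exact Finset.sum_nonneg hnn

/-- the probability that the subgraph of `G(n; μ, K, P, α)` induced on the
first `ℓ` vertices is connected is at most `min{1, ℓ^{ℓ−2} (α p_rr)^{ℓ−1}}`. -/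
theorem induced_connected_bound {r : ℕ} (μ : Fin (r + 1) → ℝ)
    (hμpos : ∀ i, 0 < μ i) (hμsum : ∑ i, μ i = 1)
    (K : Fin (r + 1) → ℕ) (P : ℕ) (α : ℝ)
    (hK1 : 1 ≤ K 0) (hKmono : Monotone K) (hKP : 2 * K (Fin.last r) ≤ P)
    (hα : α ∈ Set.Ioo (0 : ℝ) 1)
    (n ℓ : ℕ) (hℓ : 2 ≤ ℓ) (hℓn : ℓ ≤ n) :
    pr μ K α
        (fun cfg : Config n r P =>
          ((graphOf cfg).induce {x : Fin n | (x : ℕ) < ℓ}).Connected) ≤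
      min 1 ((ℓ : ℝ) ^ (ℓ - 2) * (α * pEdge P (K (Fin.last r)) (K (Fin.last r))) ^ (ℓ - 1)) := by
  have hK : ∀ i, K i ≤ K (Fin.last r) := fun i => hKmono (Fin.le_last i)
  refine le_min ?_ ?_
  · -- the empty forest imposes no condition
    have h := pr_forest_le (n := n) μ hμpos hμsum K P _ α hα hK hKP id (fun _ => 0) ∅ (by simp)
    rw [Finset.card_empty, pow_zero] at h
    exact (pr_mono μ hμpos K α hα fun c _ => by simp).trans h
  · let o : Fin n := ⟨0, by omega⟩
    let B : Finset (Fin n) := (Finset.univ.filter fun x : Fin n => (x : ℕ) < ℓ).erase o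
    have hB : B.card = ℓ - 1 := by
      rw [Finset.card_erase_of_mem (by simp [o]; omega), Fin.card_filter_val_lt,
        min_eq_right hℓn]
    have hoB : o ∉ B := Finset.notMem_erase _ _
    have hmemB : ∀ x, x ∈ B ↔ x ≠ o ∧ (x : ℕ) < ℓ := by simp [B]
    obtain ⟨F, hcard, hforest, hcover⟩ :=
      exists_forest_family (ℓ - 1) {o} B (Finset.disjoint_singleton_left.mpr hoB) hB
    have hcount : forestCount ({o} : Finset (Fin n)).card (ℓ - 1) = ℓ ^ (ℓ - 2) := by
      obtain ⟨d, rfl⟩ := Nat.exists_eq_add_of_le hℓ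
      have h1 : 2 + d - 1 = d + 1 := by omega
      have h2 : 2 + d - 2 = d := by omega
      rw [Finset.card_singleton, h1, h2, forestCount, one_mul]
      congr 1
      omega
    rw [hcount] at hcard
    have hq : 0 ≤ (α * pEdge P (K (Fin.last r)) (K (Fin.last r))) ^ (ℓ - 1) :=
      pow_nonneg (mul_nonneg hα.1.le pEdge_nonneg) _
    calc _ ≤ pr μ K α (fun c : Config n r P => ∃ p ∈ F, ∀ v ∈ B, (graphOf c).Adj v (p v)) := by
          refine pr_mono μ hμpos K α hα fun c hc => hcover _ fun T hT hne => ?_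
          obtain ⟨t, ht, u, hu, huT, hadj⟩ := cut_of_induce_connected (graphOf c) _ hc o
            (show (0 : ℕ) < ℓ by omega) T (fun t ht => ((hmemB t).mp (hT ht)).2)
            (fun h => hoB (hT h)) hne
          refine ⟨t, ht, u, Finset.mem_sdiff.mpr ⟨?_, huT⟩, hadj⟩
          rw [Finset.mem_union, Finset.mem_singleton, hmemB]
          by_cases huo : u = o
          · exact Or.inl huo
          · exact Or.inr ⟨huo, hu⟩
      _ ≤ ∑ p ∈ F, pr μ K α
          (fun c : Config n r P => ∀ v ∈ B, (graphOf c).Adj v (p v)) :=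
          pr_exists_le μ hμpos K α hα F _
      _ ≤ ∑ p ∈ F, (α * pEdge P (K (Fin.last r)) (K (Fin.last r))) ^ (ℓ - 1) := by
          refine Finset.sum_le_sum fun p hp => ?_
          obtain ⟨-, ρ, hρ⟩ := hforest p hp
          rw [← hB]
          exact pr_forest_le μ hμpos hμsum K P _ α hα hK hKP p ρ B hρ
      _ ≤ _ := by
          rw [Finset.sum_const, nsmul_eq_mul]
          exact mul_le_mul_of_nonneg_right (by exact_mod_cast hcard) hq
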